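/- arXiv:2311.03321 — 8 statements merged into one kernel-verified Lean document; each statement's English description precedes it below -/
import Mathlib

section
/- Let α be a real number, let b > b' ≥ 1 be integers, and let (x₁/y₁, x₂/y₂) be a best b-bit rational approximation of α. Let α' = p/q be a rational number with 0 < q < 2^{b'}. Define x'₁/y'₁ as the largest rational number with denominator in (0, 2^{b−b'}) that is at most x₁/y₁ + α', and x'₂/y'₂ as the smallest rational number with denominator in (0, 2^{b−b'}) that is at least x₂/y₂ + α'. Then (x'₁/y'₁, x'₂/y'₂) is a best (b−b')-bit rational approximation of α + α'. -/
/-!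
Suppose a rational `r` of denominator `< 2 ^ (b - b')` lay strictly between `r₁'` and `r₂'`.
Extremality of `r₁'` and `r₂'` puts `r` strictly between `r₁ + α'` and `r₂ + α'`, so `r - α'` lies
strictly between `r₁` and `r₂`. Its denominator divides the product of the denominators of `r` and
`α'`, hence is `< 2 ^ b`, contradicting the choice of `(r₁, r₂)`.
-/

/-- `(r₁, r₂)` is a best `b`-bit rational approximation of `α`: both rationals are
representable with positive denominator `< 2^b` (equivalently their reduced denominator
is `< 2^b`), `r₁ ≤ α ≤ r₂`, and no rational with denominator `< 2^b` lies strictly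
between `r₁` and `r₂`. -/
def IsBestApprox (α : ℝ) (b : ℕ) (r₁ r₂ : ℚ) : Prop :=
  (r₁.den : ℤ) < 2 ^ b ∧ (r₂.den : ℤ) < 2 ^ b ∧
  (r₁ : ℝ) ≤ α ∧ α ≤ (r₂ : ℝ) ∧
  ∀ r : ℚ, (r.den : ℤ) < 2 ^ b → ¬(r₁ < r ∧ r < r₂)

theorem stmt3 (α : ℝ) (b b' : ℕ) (hb'1 : 1 ≤ b') (hb'b : b' < b)
    (r₁ r₂ : ℚ) (hbest : IsBestApprox α b r₁ r₂)
    (α' : ℚ) (hα' : (α'.den : ℤ) < 2 ^ b')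
    (r₁' : ℚ) (hr₁den : (r₁'.den : ℤ) < 2 ^ (b - b')) (hr₁le : r₁' ≤ r₁ + α')
    (hr₁max : ∀ r : ℚ, (r.den : ℤ) < 2 ^ (b - b') → r ≤ r₁ + α' → r ≤ r₁')
    (r₂' : ℚ) (hr₂den : (r₂'.den : ℤ) < 2 ^ (b - b')) (hr₂ge : r₂ + α' ≤ r₂')
    (hr₂min : ∀ r : ℚ, (r.den : ℤ) < 2 ^ (b - b') → r₂ + α' ≤ r → r₂' ≤ r) :
    IsBestApprox (α + (α' : ℝ)) (b - b') r₁' r₂' := by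
  obtain ⟨-, -, h₁, h₂, hgap⟩ := hbest
  refine ⟨hr₁den, hr₂den, ?_, ?_, ?_⟩
  · have h : (r₁' : ℝ) ≤ r₁ + α' := by exact_mod_cast hr₁le
    linarith
  · have h : (r₂ : ℝ) + α' ≤ r₂' := by exact_mod_cast hr₂ge
    linarith
  · rintro r hr ⟨hlt₁, hlt₂⟩
    have hlo : r₁ + α' < r := not_le.mp fun h => (hr₁max r hr h).not_gt hlt₁
    have hhi : r < r₂ + α' := not_le.mp fun h => (hr₂min r hr h).not_gt hlt₂
    -- Translating back by `α'` gives a rational strictly between `r₁` and `r₂` whose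
    -- denominator divides `r.den * α'.den < 2 ^ (b - b') * 2 ^ b' = 2 ^ b`.
    refine hgap (r - α') ?_ ⟨by linarith, by linarith⟩
    have hle : (r - α').den ≤ r.den * α'.den :=
      Nat.le_of_dvd (Nat.mul_pos r.den_pos α'.den_pos) (Rat.sub_den_dvd r α')
    calc ((r - α').den : ℤ) ≤ r.den * α'.den := by exact_mod_cast hle
      _ < 2 ^ (b - b') * 2 ^ b' := by
        apply mul_lt_mul'' hr hα' <;> positivity
      _ = 2 ^ b := by rw [← pow_add, Nat.sub_add_cancel hb'b.le]
end

section
/- For every rational number x and all integers 0 ≤ j < l, writing W_i = 2^i·x^{(i)} + 1 for each i ≥ 0, one has 2^{l−j}·W_j − 2^{l−j+1} ≤ W_l ≤ 2^{l−j}·W_j. -/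
/-!
Multiplying by `2^i` turns the truncation `x^(i)` into `± ⌊2^i |x|⌋`. Passing from `j` to `l = j + d`
bits multiplies this floor by `2^d` and adds between `0` and `2^d - 1`
(`floor_two_pow_bounds`); both inequalities then follow linearly for either sign of `x`.
-/

/-- Truncation of the binary expansion of a rational `x` after `j` fractional bits:
`x^(j) = ⌊2^j·x⌋/2^j` if `x ≥ 0`, and `x^(j) = −⌊2^j·(−x)⌋/2^j` if `x < 0`. -/
def btrunc (x : ℚ) (j : ℕ) : ℚ :=
  if 0 ≤ x then (⌊(2 ^ j : ℚ) * x⌋ : ℚ) / 2 ^ j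
  else -((⌊(2 ^ j : ℚ) * (-x)⌋ : ℚ) / 2 ^ j)

/-- With `a = ⌊2^j y⌋` and `b = ⌊2^(j+d) y⌋`, the integer `b` lies in `[2^d a, 2^d a + 2^d - 1]`:
its last `d` bits are arbitrary. -/
lemma floor_two_pow_bounds (y : ℚ) (j d : ℕ) :
    (2 ^ d : ℚ) * ⌊(2 ^ j : ℚ) * y⌋ ≤ ⌊(2 ^ (j + d) : ℚ) * y⌋ ∧
    (⌊(2 ^ (j + d) : ℚ) * y⌋ : ℚ) + 1 ≤ (2 ^ d : ℚ) * ⌊(2 ^ j : ℚ) * y⌋ + 2 ^ d := by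
  have hd : (0 : ℚ) < 2 ^ d := by positivity
  have e : (2 ^ (j + d) : ℚ) * y = 2 ^ d * (2 ^ j * y) := by ring
  rw [e]
  generalize (2 ^ j : ℚ) * y = z
  constructor
  · have h : (2 ^ d : ℤ) * ⌊z⌋ ≤ ⌊(2 ^ d : ℚ) * z⌋ := by
      rw [Int.le_floor]
      push_cast
      exact mul_le_mul_of_nonneg_left (Int.floor_le z) hd.le
    exact_mod_cast h
  · have h : ⌊(2 ^ d : ℚ) * z⌋ < (2 ^ d : ℤ) * ⌊z⌋ + 2 ^ d := by
      rw [Int.floor_lt]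
      push_cast
      nlinarith [Int.lt_floor_add_one z]
    exact_mod_cast Int.add_one_le_of_lt h

theorem stmt9 (x : ℚ) (j l : ℕ) (hjl : j < l) :
    (2 ^ (l - j) : ℚ) * ((2 ^ j : ℚ) * btrunc x j + 1) - 2 ^ (l - j + 1)
      ≤ (2 ^ l : ℚ) * btrunc x l + 1 ∧
    (2 ^ l : ℚ) * btrunc x l + 1
      ≤ (2 ^ (l - j) : ℚ) * ((2 ^ j : ℚ) * btrunc x j + 1) := by
  obtain ⟨d, rfl⟩ := Nat.exists_eq_add_of_le hjl.le
  have hn : (1 : ℚ) ≤ 2 ^ d := one_le_pow₀ (by norm_num)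
  have hj : (2 ^ j : ℚ) ≠ 0 := by positivity
  have hl : (2 ^ (j + d) : ℚ) ≠ 0 := by positivity
  rw [Nat.add_sub_cancel_left, pow_succ (2 : ℚ) d]
  unfold btrunc
  split_ifs
  · obtain ⟨h1, h2⟩ := floor_two_pow_bounds x j d
    rw [mul_div_cancel₀ _ hj, mul_div_cancel₀ _ hl]
    constructor <;> linarith
  · obtain ⟨h1, h2⟩ := floor_two_pow_bounds (-x) j d
    rw [← neg_div, ← neg_div, mul_div_cancel₀ _ hj, mul_div_cancel₀ _ hl]
    constructor <;> linarith
end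

section
/- Let G = (V, E) be a directed graph with edge weights w : E → ℚ and let k ≥ 0 be an integer. Define the integer-valued weights w^{(k+1)}(e) = 2^{k+1}·(w(e))^{(k+1)} + 1 for e ∈ E. If a function q : V → ℚ satisfies w^{(k+1)}(u,v) + q(u) − q(v) ≥ 0 for every edge (u,v) ∈ E, then the function p* = q/2^{k+1} satisfies w(u,v) + p*(u) − p*(v) ≥ −2^{−k} for every edge (u,v) ∈ E, i.e., p* is a 2^{−k}-feasible price function of G. -/
/-- Truncation is toward zero, so it exceeds `x` only for negative `x`, and then by less than
one unit in the last place. -/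
lemma two_pow_mul_btrunc_le (x : ℚ) (j : ℕ) :
    (2 ^ j : ℚ) * btrunc x j ≤ 2 ^ j * x + 1 := by
  have hpos : (0 : ℚ) < 2 ^ j := by positivity
  unfold btrunc
  split_ifs
  · rw [mul_div_cancel₀ _ hpos.ne']
    linarith [Int.floor_le ((2 ^ j : ℚ) * x)]
  · rw [mul_neg, mul_div_cancel₀ _ hpos.ne']
    linarith [Int.lt_floor_add_one ((2 ^ j : ℚ) * (-x))]

/-- If `q` is a feasible price function for the integral weights
`w^(k+1)(e) = 2^(k+1)·(w e)^(k+1) + 1`, then `q / 2^(k+1)` is a `2^(-k)`-feasible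
price function for the original weights `w`. -/
theorem stmt10 {V : Type*} (E : V → V → Prop) (w : V → V → ℚ) (k : ℕ) (q : V → ℚ)
    (hq : ∀ u v, E u v →
      0 ≤ (2 ^ (k + 1) : ℚ) * btrunc (w u v) (k + 1) + 1 + q u - q v) :
    ∀ u v, E u v →
      -(1 / 2 ^ k : ℚ) ≤ w u v + q u / 2 ^ (k + 1) - q v / 2 ^ (k + 1) := by
  intro u v huv
  have hpos : (0 : ℚ) < 2 ^ (k + 1) := by positivity
  have hsum : 0 ≤ (2 ^ (k + 1) : ℚ) * w u v + 2 + q u - q v := by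
    linarith [hq u v huv, two_pow_mul_btrunc_le (w u v) (k + 1)]
  -- The rounding error and the added `1` total at most `2`, and `2 / 2 ^ (k + 1) = 1 / 2 ^ k`.
  have hsplit : w u v + q u / 2 ^ (k + 1) - q v / 2 ^ (k + 1) + 1 / 2 ^ k
      = ((2 ^ (k + 1) : ℚ) * w u v + 2 + q u - q v) / 2 ^ (k + 1) := by
    field_simp
    ring
  linarith [div_nonneg hsum hpos.le]
end

section
/- Let H be a connected simple undirected graph on a finite vertex set V with graph distance δ_H, let uv be an edge of H, and let b : V → ℤ. For each x ∈ V set a_x = min(δ_H(u, x), δ_H(v, x)) and Y_x = b_x − a_x. If there exists x ∈ V such that Y_y ≤ Y_x − 2 for all y ∈ V with y ≠ x, then x is the unique minimizer over w ∈ V of δ_H(u, w) − b_w and also the unique minimizer over w ∈ V of δ_H(v, w) − b_w; hence both u and v are assigned to the cluster centered at x. -/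
theorem stmt13 {V : Type*} [Fintype V] (H : SimpleGraph V) (hconn : H.Connected)
    (u v : V) (huv : H.Adj u v) (b : V → ℤ) (x : V)
    (hx : ∀ y : V, y ≠ x →
      b y - (min (H.dist u y) (H.dist v y) : ℤ)
        ≤ b x - (min (H.dist u x) (H.dist v x) : ℤ) - 2) :
    (∀ z : V, z ≠ x → (H.dist u x : ℤ) - b x < (H.dist u z : ℤ) - b z) ∧
    (∀ z : V, z ≠ x → (H.dist v x : ℤ) - b x < (H.dist v z : ℤ) - b z) := by
  -- Adjacency of `u` and `v` puts both distances to `x` within `1` of their minimum, while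
  -- distances to `z` are at least their minimum; the gap of `2` absorbs the loss of `1`.
  have huv1 : H.dist u v = 1 := SimpleGraph.dist_eq_one_iff_adj.mpr huv
  have hvu1 : H.dist v u = 1 := SimpleGraph.dist_eq_one_iff_adj.mpr huv.symm
  have hu : H.dist u x ≤ H.dist u v + H.dist v x := hconn.dist_triangle
  have hv : H.dist v x ≤ H.dist v u + H.dist u x := hconn.dist_triangle
  constructor <;> intro z hz <;> have h := hx z hz <;> omega
end

section
/- Let V be a finite set with |V| = n ≥ 1, let s ∈ V, and let par : V → V satisfy par(s) = s and the condition that for every v ∈ V there exists j ≥ 0 with par^j(v) = s (so par is the parent function of a tree rooted at s). Let h and m be integers with 1 ≤ h ≤ n and 0 ≤ m ≤ n, and let R be a uniformly random m-element subset of V. Then with probability at least 1 − n·((n−h)/n)^m, every vertex v ∈ V with v ≠ s has some iterate par^j(v) with 1 ≤ j ≤ h belonging to R ∪ {s}; that is, every vertex other than the root has a strict ancestor in R ∪ {s} at most h hops away. -/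
/-!
The proof is a union bound. Let `A v` be the set of the first `h` strict ancestors of `v`. If `R`
violates the condition at `v`, then `R` misses `A v` and `s ∉ A v`. Iterates of `par` can only
repeat at the root (`iterate_eq_root_of_repeat`), so `A v` has exactly `h` elements, and at most
`(n - h).choose m` of the `m`-subsets miss it. Finally `(n - h).choose m / n.choose m` is a product
of `m` factors `(n - h - i) / (n - i)`, each at most `(n - h) / n` (`choose_mul_pow_le`).
-/

/-- The ratio bound `a.choose m / n.choose m ≤ (a / n) ^ m`, with denominators cleared. -/
lemma choose_mul_pow_le {a n : ℕ} (han : a ≤ n) (m : ℕ) :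
    a.choose m * n ^ m ≤ n.choose m * a ^ m := by
  have key : ∀ k : ℕ, a.descFactorial k * n ^ k ≤ n.descFactorial k * a ^ k := by
    intro k
    induction k with
    | zero => simp
    | succ k ih =>
      have step : (a - k) * n ≤ (n - k) * a := by
        rw [Nat.sub_mul, Nat.sub_mul, Nat.mul_comm n a]
        exact Nat.sub_le_sub_left (Nat.mul_le_mul_left k han) _
      rw [Nat.descFactorial_succ, Nat.descFactorial_succ]
      calc (a - k) * a.descFactorial k * n ^ (k + 1)
          = ((a - k) * n) * (a.descFactorial k * n ^ k) := by ring
        _ ≤ ((n - k) * a) * (n.descFactorial k * a ^ k) := Nat.mul_le_mul step ih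
        _ = (n - k) * n.descFactorial k * a ^ (k + 1) := by ring
  have hm := key m
  rw [Nat.descFactorial_eq_factorial_mul_choose, Nat.descFactorial_eq_factorial_mul_choose,
    Nat.mul_assoc, Nat.mul_assoc] at hm
  exact Nat.le_of_mul_le_mul_left hm m.factorial_pos

/-- A vertex that recurs along its own parent chain is periodic, yet it reaches the fixed point
`s`; hence it is `s`. -/
lemma iterate_eq_root_of_repeat {V : Type*} {s : V} {par : V → V} (hs : par s = s)
    (hroot : ∀ v : V, ∃ j : ℕ, par^[j] v = s) {v : V} {i j : ℕ} (hij : i < j)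
    (he : par^[i] v = par^[j] v) : par^[i] v = s := by
  obtain ⟨d, rfl⟩ := Nat.exists_eq_add_of_lt hij
  obtain ⟨k, hk⟩ := hroot (par^[i] v)
  have hper : par^[d + 1] (par^[i] v) = par^[i] v := by
    rw [← Function.iterate_add_apply, he]
    congr 1
    omega
  have hmul : par^[(d + 1) * k] (par^[i] v) = par^[i] v := by
    rw [Function.iterate_mul]
    exact Function.iterate_fixed hper k
  -- `(d + 1) * k ≥ k` steps carry the vertex both back to itself and to the root.
  rw [← hmul, show (d + 1) * k = d * k + k by ring, Function.iterate_add_apply, hk]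
  exact Function.iterate_fixed hs _

open Classical in
/-- Hitting-set lemma: with probability at least `1 - n·((n-h)/n)^m` over a uniformly
random `m`-element subset `R` of `V` (formulated by counting `m`-element subsets),
every non-root vertex has a strict ancestor in `R ∪ {s}` at most `h` hops away. -/
theorem stmt15 {V : Type*} [Fintype V] [DecidableEq V] (n : ℕ) (hn : Fintype.card V = n)
    (hn1 : 1 ≤ n) (s : V) (par : V → V) (hs : par s = s)
    (hroot : ∀ v : V, ∃ j : ℕ, par^[j] v = s)
    (h m : ℕ) (hh1 : 1 ≤ h) (hhn : h ≤ n) (hmn : m ≤ n) :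
    ((1 : ℝ) - n * (((n - h : ℕ) : ℝ) / n) ^ m)
        * ((Finset.univ : Finset V).powersetCard m).card
      ≤ ((((Finset.univ : Finset V).powersetCard m).filter
          (fun R => ∀ v : V, v ≠ s →
            ∃ j : ℕ, 1 ≤ j ∧ j ≤ h ∧ (par^[j] v ∈ R ∨ par^[j] v = s))).card : ℝ) := by
  set A : V → Finset V := fun v => (Finset.Icc 1 h).image (fun j => par^[j] v) with hA
  set good := ((Finset.univ : Finset V).powersetCard m).filter
          (fun R => ∀ v : V, v ≠ s →
            ∃ j : ℕ, 1 ≤ j ∧ j ≤ h ∧ (par^[j] v ∈ R ∨ par^[j] v = s)) with hgood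
  set B : Finset V := Finset.univ.filter (fun v => s ∉ A v) with hB
  have hcardA : ∀ v ∈ B, (A v).card = h := by
    intro v hv
    have hsA : ∀ j, 1 ≤ j → j ≤ h → par^[j] v ≠ s := by
      intro j h1 h2 hj
      refine (Finset.mem_filter.mp hv).2 (Finset.mem_image.mpr ⟨j, ?_, hj⟩)
      exact Finset.mem_Icc.mpr ⟨h1, h2⟩
    rw [hA, Finset.card_image_of_injOn, Nat.card_Icc, Nat.add_sub_cancel]
    intro i hi j hj hij
    simp only [Finset.coe_Icc, Set.mem_Icc] at hi hj
    rcases lt_trichotomy i j with hlt | heq | hgt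
    · exact absurd (iterate_eq_root_of_repeat hs hroot hlt hij) (hsA i hi.1 hi.2)
    · exact heq
    · exact absurd (iterate_eq_root_of_repeat hs hroot hgt hij.symm) (hsA j hj.1 hj.2)
  have hcover : (Finset.univ : Finset V).powersetCard m ⊆
      good ∪ B.biUnion (fun v => (A v)ᶜ.powersetCard m) := by
    intro R hR
    by_cases hg : R ∈ good
    · exact Finset.mem_union_left _ hg
    · apply Finset.mem_union_right
      rw [hgood, Finset.mem_filter] at hg
      push Not at hg
      obtain ⟨v, -, hv⟩ := hg hR
      refine Finset.mem_biUnion.mpr ⟨v, ?_, ?_⟩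
      · simp only [hB, hA, Finset.mem_filter, Finset.mem_univ, true_and, Finset.mem_image,
          Finset.mem_Icc, not_exists, not_and]
        exact fun j hj => (hv j hj.1 hj.2).2
      · refine Finset.mem_powersetCard.mpr ⟨fun x hx => ?_, (Finset.mem_powersetCard.mp hR).2⟩
        simp only [hA, Finset.mem_compl, Finset.mem_image, Finset.mem_Icc, not_exists, not_and]
        rintro j hj rfl
        exact (hv j hj.1 hj.2).1 hx
  have hbad : (B.biUnion (fun v => (A v)ᶜ.powersetCard m)).card ≤ n * (n - h).choose m := by
    refine (Finset.card_biUnion_le_card_mul B _ ((n - h).choose m) fun v hv => ?_).trans ?_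
    · rw [Finset.card_powersetCard, Finset.card_compl, hn, hcardA v hv]
    · exact Nat.mul_le_mul_right _ (hn ▸ Finset.card_le_univ B)
  have hcount : n.choose m ≤ good.card + n * (n - h).choose m := by
    have hle := (Finset.card_le_card hcover).trans (Finset.card_union_le _ _)
    rw [Finset.card_powersetCard, Finset.card_univ, hn] at hle
    omega
  have hratio : ((n - h).choose m : ℝ) ≤ (((n - h : ℕ) : ℝ) / n) ^ m * n.choose m := by
    have hpos : (0 : ℝ) < (n : ℝ) ^ m := by positivity
    rw [div_pow, div_mul_eq_mul_div, le_div_iff₀ hpos, mul_comm (_ ^ m)]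
    exact_mod_cast choose_mul_pow_le (Nat.sub_le n h) m
  have hcount' : (n.choose m : ℝ) ≤ good.card + n * (n - h).choose m := by exact_mod_cast hcount
  rw [Finset.card_powersetCard, Finset.card_univ, hn]
  have := mul_le_mul_of_nonneg_left hratio (Nat.cast_nonneg (α := ℝ) n)
  linarith
end

section
/- Let n ≥ 1 be an integer. Consider the following n-turn process maintaining a function a : {1,…,n} → {0,1,…,n} ∪ {∞}, initially a_i = ∞ for all i. In each turn t = 1, …, n: first, every finite value a_i is decreased by 1 (∞ stays ∞); second, Alice pays one dollar for each index i with a_i = 0, and each such a_i is reset to ∞; third, an adversary chooses an arbitrary function b : {1,…,n} → {1,…,n} ∪ {∞} whose finite values, sorted increasingly, form the sequence (1, 2, …, c) for some 1 ≤ c ≤ n, and a_i is replaced by min(a_i, b_i) for every i. Then, regardless of the adversary's choices, the total number of dollars Alice pays over all n turns is at most 2·n·√n. -/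
/-!
Every payment at turn `t` on index `i` has a source: a turn `s < t` with `b s i = t - s` such that
no payment on `i` occurs strictly between `s` and `t` (`exists_source`). Call `t - s` the length of
the payment, and let `m = ⌊√n⌋`.

* A payment is determined by its source turn and its length, since each finite value is used at
  most once in each turn. Hence at most `n * m` payments have length at most `m`.
* For fixed `i` the intervals `(s, t]` are pairwise disjoint subsets of `{0, …, n - 1}`, so there
  are at most `n * n / (m + 1)` payments of length greater than `m` over all indices.

As `m ≤ √n < m + 1`, each of the two counts is at most `n * √n`.
-/

/-- Every finite value is positive and comes from the adversary's choice at some earlier turn `s`,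
with no payment on `i` since. -/
lemma exists_source {n : ℕ} {b a : ℕ → Fin n → ℕ∞}
    (hpos : ∀ t < n, ∀ i, b t i ≠ 0)
    (ha0 : ∀ i, a 0 i = ⊤)
    (hstep : ∀ t < n, ∀ i, a (t + 1) i
        = min (if a t i - 1 = 0 then ⊤ else a t i - 1) (b t i)) (i : Fin n) :
    ∀ t ≤ n, ∀ k : ℕ, a t i = k → 1 ≤ k ∧ ∃ s < t, b s i = ((k + t - 1 - s : ℕ) : ℕ∞) ∧
      ∀ u, s < u → u < t → a u i - 1 ≠ 0 := by
  intro t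
  induction t with
  | zero => intro _ k hk; simp [ha0] at hk
  | succ t ih =>
    intro ht k hk
    have htn : t < n := ht
    rw [hstep t htn i] at hk
    rcases min_choice (if a t i - 1 = 0 then ⊤ else a t i - 1) (b t i) with h | h
    · rw [h] at hk
      split_ifs at hk with h0
      · simp at hk
      · have hk0 : k ≠ 0 := by
          rintro rfl
          exact h0 (by simpa using hk)
        have hak : a t i = ((k + 1 : ℕ) : ℕ∞) := by
          cases hx : a t i with
          | top => rw [hx] at hk; simp at hk
          | coe x =>
            rw [hx] at hk
            have : x - 1 = k := by exact_mod_cast hk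
            norm_cast
            omega
        obtain ⟨-, s, hs, hbs, hu⟩ := ih htn.le (k + 1) hak
        refine ⟨by omega, s, by omega, ?_, ?_⟩
        · rw [hbs]; congr 1; omega
        · intro u hsu hut
          rcases Nat.lt_succ_iff_lt_or_eq.mp hut with h1 | rfl
          · exact hu u hsu h1
          · exact h0
    · rw [h] at hk
      have hk0 : k ≠ 0 := by
        rintro rfl
        exact hpos t htn i (by simpa using hk)
      refine ⟨by omega, t, by omega, ?_, fun u h1 h2 => by omega⟩
      rw [hk]; congr 1; omega

/-- The Alice–Bob game: values `a t i ∈ {0,…,n} ∪ {∞}` start at `∞`. In each of the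
`n` turns `t = 0,…,n-1`: every value is decreased by one (`∞` stays `∞`); Alice pays a
dollar for each index whose value became `0`, and those values are reset to `∞`; then
the adversary picks `b t : Fin n → ℕ∞` whose finite values sorted increasingly form
`(1, 2, …, c)` for some `1 ≤ c ≤ n`, and each `a i` is replaced by `min (a i) (b t i)`.
Alice pays at most `2·n·√n` dollars in total. -/
theorem stmt16 (n : ℕ) (hn : 1 ≤ n) (b : ℕ → Fin n → ℕ∞)
    (hb : ∀ t < n, ∃ c : ℕ, 1 ≤ c ∧ c ≤ n ∧ ∀ k : ℕ,
      (Finset.univ.filter (fun i => b t i = (k : ℕ∞))).card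
        = if 1 ≤ k ∧ k ≤ c then 1 else 0)
    (a : ℕ → Fin n → ℕ∞)
    (ha0 : ∀ i, a 0 i = ⊤)
    (hstep : ∀ t < n, ∀ i, a (t + 1) i
        = min (if a t i - 1 = 0 then ⊤ else a t i - 1) (b t i)) :
    ((∑ t ∈ Finset.range n,
        (Finset.univ.filter (fun i => a t i - 1 = 0)).card : ℕ) : ℝ)
      ≤ 2 * n * Real.sqrt n := by
  have hpos : ∀ t < n, ∀ i, b t i ≠ 0 := by
    intro t ht i h0
    obtain ⟨c, -, -, hc⟩ := hb t ht
    have h := hc 0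
    rw [if_neg (by omega), Finset.card_eq_zero] at h
    have : i ∈ (Finset.univ.filter (fun i => b t i = ((0 : ℕ) : ℕ∞))) := by simp [h0]
    rw [h] at this
    simp at this
  have hinj : ∀ t < n, ∀ k : ℕ, ∀ i j, b t i = k → b t j = k → i = j := by
    intro t ht k i j hi hj
    obtain ⟨c, -, -, hc⟩ := hb t ht
    have h : (Finset.univ.filter (fun i => b t i = (k : ℕ∞))).card ≤ 1 := by
      rw [hc k]; split_ifs <;> simp
    exact Finset.card_le_one.mp h i (by simp [hi]) j (by simp [hj])
  have hsrc : ∀ p : ℕ × Fin n, ∃ s, p.1 < n → a p.1 p.2 - 1 = 0 →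
      s < p.1 ∧ b s p.2 = ((p.1 - s : ℕ) : ℕ∞) ∧ ∀ u, s < u → u < p.1 → a u p.2 - 1 ≠ 0 := by
    rintro ⟨t, i⟩
    by_cases h : t < n ∧ a t i - 1 = 0
    · obtain ⟨ht, h0⟩ := h
      have key := exists_source hpos ha0 hstep i t ht.le
      have h1 : a t i = ((1 : ℕ) : ℕ∞) := by
        cases hx : a t i with
        | top => rw [hx] at h0; simp at h0
        | coe x =>
          rw [hx] at h0
          have h2 : x - 1 = 0 := by exact_mod_cast h0
          have := (key x hx).1
          norm_cast
          omega
      obtain ⟨-, s, hs, hbs, hu⟩ := key 1 h1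
      refine ⟨s, fun _ _ => ⟨hs, ?_, hu⟩⟩
      rw [hbs]; congr 1; simp
    · exact ⟨0, fun h1 h2 => absurd ⟨h1, h2⟩ h⟩
  choose s hs using hsrc
  -- The set of all payments, split by comparing their lengths with `m = ⌊√n⌋`.
  set P : Finset (ℕ × Fin n) :=
    (Finset.range n ×ˢ Finset.univ).filter (fun p => a p.1 p.2 - 1 = 0) with hP
  have hmem : ∀ p ∈ P, p.1 < n ∧ a p.1 p.2 - 1 = 0 := by
    intro p hp
    simpa [hP] using hp
  have hsum : ∑ t ∈ Finset.range n, (Finset.univ.filter (fun i => a t i - 1 = 0)).card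
      = P.card := by
    rw [hP, Finset.card_filter, Finset.sum_product]
    simp only [Finset.card_filter]
  set m := Nat.sqrt n with hm
  have hshort : (P.filter (fun p => p.1 - s p ≤ m)).card ≤ n * m := by
    have hcard : (Finset.range n ×ˢ Finset.Icc 1 m).card = n * m := by simp
    rw [← hcard]
    refine Finset.card_le_card_of_injOn (fun p => (s p, p.1 - s p)) ?_ ?_
    · intro p hp
      obtain ⟨hp, hl⟩ := Finset.mem_filter.mp hp
      obtain ⟨h1, h2⟩ := hmem p hp
      obtain ⟨h3, -, -⟩ := hs p h1 h2
      simp only [Finset.coe_product, Set.mem_prod, Finset.mem_coe, Finset.mem_range,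
        Finset.mem_Icc]
      omega
    · intro p hp q hq hpq
      obtain ⟨h1, h2⟩ := hmem p (Finset.mem_filter.mp hp).1
      obtain ⟨h3, h4, -⟩ := hs p h1 h2
      obtain ⟨h1', h2'⟩ := hmem q (Finset.mem_filter.mp hq).1
      obtain ⟨h3', h4', -⟩ := hs q h1' h2'
      simp only [Prod.mk.injEq] at hpq
      obtain ⟨e1, e2⟩ := hpq
      rw [← e2, ← e1] at h4'
      exact Prod.ext (by omega) (hinj (s p) (by omega) _ _ _ h4 h4')
  have hlong : (P.filter (fun p => ¬ p.1 - s p ≤ m)).card * (m + 1) ≤ n * n := by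
    set L := P.filter (fun p => ¬ p.1 - s p ≤ m) with hL
    have hdisj : (L : Set (ℕ × Fin n)).PairwiseDisjoint
        (fun p => Finset.Ioc (s p) p.1 ×ˢ ({p.2} : Finset (Fin n))) := by
      intro p hp q hq hne
      obtain ⟨h1, h2⟩ := hmem p (Finset.mem_filter.mp hp).1
      obtain ⟨-, -, h3⟩ := hs p h1 h2
      obtain ⟨h1', h2'⟩ := hmem q (Finset.mem_filter.mp hq).1
      obtain ⟨-, -, h3'⟩ := hs q h1' h2'
      refine Finset.disjoint_left.mpr ?_
      rintro ⟨u, i⟩ hu hv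
      simp only [Finset.mem_product, Finset.mem_Ioc, Finset.mem_singleton] at hu hv
      obtain ⟨⟨hu1, hu2⟩, rfl⟩ := hu
      obtain ⟨⟨hu1', hu2'⟩, e⟩ := hv
      -- The earlier of two overlapping payments would lie inside the interval of the later one.
      rcases lt_trichotomy p.1 q.1 with h | h | h
      · exact h3' p.1 (by omega) h (e ▸ h2)
      · exact hne (Prod.ext h e)
      · exact h3 q.1 (by omega) h (e ▸ h2')
    calc L.card * (m + 1)
        ≤ ∑ p ∈ L, (Finset.Ioc (s p) p.1 ×ˢ ({p.2} : Finset (Fin n))).card := by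
          rw [← smul_eq_mul]
          refine Finset.card_nsmul_le_sum _ _ _ fun p hp => ?_
          have := (Finset.mem_filter.mp hp).2
          simp only [Finset.card_product, Nat.card_Ioc, Finset.card_singleton]
          omega
      _ = (L.biUnion fun p => Finset.Ioc (s p) p.1 ×ˢ ({p.2} : Finset (Fin n))).card :=
          (Finset.card_biUnion hdisj).symm
      _ ≤ (Finset.range n ×ˢ (Finset.univ : Finset (Fin n))).card := by
          refine Finset.card_le_card ?_
          intro x hx
          obtain ⟨p, hp, hx⟩ := Finset.mem_biUnion.mp hx
          have h1 := (hmem p (Finset.mem_filter.mp hp).1).1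
          simp only [Finset.mem_product, Finset.mem_Ioc] at hx
          simp only [Finset.mem_product, Finset.mem_range, Finset.mem_univ, and_true]
          omega
      _ = n * n := by simp
  rw [hsum, ← Finset.card_filter_add_card_filter_not (s := P) (fun p => p.1 - s p ≤ m)]
  generalize (P.filter (fun p => p.1 - s p ≤ m)).card = S at hshort ⊢
  generalize (P.filter (fun p => ¬ p.1 - s p ≤ m)).card = L at hlong ⊢
  have hS : (S : ℝ) ≤ n * m := by exact_mod_cast hshort
  have hL : (L : ℝ) * (m + 1) ≤ n * n := by exact_mod_cast hlong
  have hm1 : (m : ℝ) ≤ √n := Real.nat_sqrt_le_real_sqrt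
  have hm2 : √(n : ℝ) ≤ m + 1 := Real.real_sqrt_le_nat_sqrt_succ
  have hsq : √(n : ℝ) * √n = n := Real.mul_self_sqrt (Nat.cast_nonneg n)
  have hr : 0 < √(n : ℝ) := Real.sqrt_pos.mpr (by exact_mod_cast hn)
  have h1 : (n : ℝ) * m ≤ n * √n := by gcongr
  have h2 : (L : ℝ) ≤ n * √n := by
    refine le_of_mul_le_mul_right ?_ hr
    calc (L : ℝ) * √n ≤ L * (m + 1) := by gcongr
      _ ≤ n * n := hL
      _ = n * √n * √n := by rw [mul_assoc, hsq]
  push_cast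
  linarith
end

section
/- Let S be a finite set of prime numbers. Then, when the rational number ∑_{p ∈ S} 1/p is written in lowest terms, its denominator equals ∏_{p ∈ S} p. -/
/-! Denominators of rationals multiply under addition when they are coprime. Induction on `S` then
gives the result: a new prime `p ∉ S` is coprime to the product of the primes in `S`. -/

/-- Since `a = (a + b) + (-b)`, `a.den` divides `(a + b).den * b.den`, hence divides `(a + b).den`
by coprimality; likewise for `b.den`. -/
theorem den_add_of_coprime (a b : ℚ) (h : a.den.Coprime b.den) :
    (a + b).den = a.den * b.den := by
  refine Nat.dvd_antisymm (Rat.add_den_dvd a b) (h.mul_dvd_of_dvd_of_dvd ?_ ?_)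
  · have h1 := Rat.add_den_dvd (a + b) (-b)
    rw [add_neg_cancel_right, Rat.den_neg_eq_den] at h1
    exact h.dvd_of_dvd_mul_right h1
  · have h1 := Rat.add_den_dvd (a + b) (-a)
    rw [add_neg_cancel_comm, Rat.den_neg_eq_den] at h1
    exact h.symm.dvd_of_dvd_mul_right h1

theorem stmt17 (S : Finset ℕ) (hS : ∀ p ∈ S, Nat.Prime p) :
    (∑ p ∈ S, (1 : ℚ) / p).den = ∏ p ∈ S, p := by
  induction S using Finset.induction_on with
  | empty => simp
  | insert p S hp ih =>
    have hpp : p.Prime := hS p (Finset.mem_insert_self p S)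
    have hS' : ∀ q ∈ S, q.Prime := fun q hq => hS q (Finset.mem_insert_of_mem hq)
    have hden : ((1 : ℚ) / p).den = p := by
      simp [hpp.ne_zero]
    rw [Finset.sum_insert hp, Finset.prod_insert hp, den_add_of_coprime, hden, ih hS']
    rw [hden, ih hS']
    refine Nat.Coprime.prod_right fun q hq => (Nat.coprime_primes hpp (hS' q hq)).2 ?_
    rintro rfl
    exact hp hq
end

section
/- Let P be a finite set of prime numbers. Then the map sending a subset S ⊆ P to the rational number ∑_{p ∈ S} 1/p is injective; that is, distinct subsets of P have distinct sums of reciprocals. -/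
/-!
If `q ∈ S` but `q ∉ T`, multiply both sums by the product `N` of all primes of `P` other than `q`.
Every term except the one of `q` becomes an integer, so `N / q` is an integer as well; but `q` does
not divide a product of primes different from `q`.
-/

theorem exists_int_prod_mul_sum_inv (Q U : Finset ℕ) (hQ : ∀ p ∈ Q, p ≠ 0) (hU : U ⊆ Q) :
    ∃ a : ℤ, ((∏ p ∈ Q, p : ℕ) : ℚ) * ∑ p ∈ U, (1 : ℚ) / p = a := by
  refine ⟨∑ p ∈ U, ((∏ r ∈ Q.erase p, r : ℕ) : ℤ), ?_⟩
  rw [Finset.mul_sum, Int.cast_sum]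
  refine Finset.sum_congr rfl fun p hp => ?_
  have hp0 : (p : ℚ) ≠ 0 := by exact_mod_cast hQ p (hU hp)
  rw [← Finset.mul_prod_erase Q (fun r => r) (hU hp), Nat.cast_mul, Int.cast_natCast]
  field_simp

theorem subset_of_sum_inv_eq (P : Finset ℕ) (hP : ∀ p ∈ P, Nat.Prime p)
    (S T : Finset ℕ) (hS : S ⊆ P) (hT : T ⊆ P)
    (h : ∑ p ∈ S, (1 : ℚ) / p = ∑ p ∈ T, (1 : ℚ) / p) : S ⊆ T := by
  intro q hqS
  by_contra hqT
  have hq : q.Prime := hP q (hS hqS)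
  have hQ : ∀ p ∈ P.erase q, p ≠ 0 := fun p hp => (hP p (Finset.mem_of_mem_erase hp)).ne_zero
  obtain ⟨a, ha⟩ := exists_int_prod_mul_sum_inv (P.erase q) (S.erase q) hQ
    (Finset.erase_subset_erase q hS)
  obtain ⟨b, hb⟩ := exists_int_prod_mul_sum_inv (P.erase q) T hQ
    (Finset.subset_erase.2 ⟨hT, hqT⟩)
  rw [← h, ← Finset.add_sum_erase S _ hqS, mul_add, ha] at hb
  have hq0 : (q : ℚ) ≠ 0 := by exact_mod_cast hq.ne_zero
  have hN : ((∏ p ∈ P.erase q, p : ℕ) : ℚ) = q * (b - a) := by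
    rw [← hb]
    field_simp
    ring
  have hdvd : (q : ℤ) ∣ ((∏ p ∈ P.erase q, p : ℕ) : ℤ) := ⟨b - a, by exact_mod_cast hN⟩
  obtain ⟨p, hp, hqp⟩ := (hq.prime.dvd_finsetProd_iff _).1 (Int.natCast_dvd_natCast.1 hdvd)
  exact Finset.ne_of_mem_erase hp
    ((Nat.prime_dvd_prime_iff_eq hq (hP p (Finset.mem_of_mem_erase hp))).1 hqp).symm

theorem stmt18 (P : Finset ℕ) (hP : ∀ p ∈ P, Nat.Prime p)
    (S T : Finset ℕ) (hS : S ⊆ P) (hT : T ⊆ P)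
    (h : ∑ p ∈ S, (1 : ℚ) / p = ∑ p ∈ T, (1 : ℚ) / p) : S = T :=
  (subset_of_sum_inv_eq P hP S T hS hT h).antisymm (subset_of_sum_inv_eq P hP T S hT hS h.symm)
end
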